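/- arXiv:2305.17014 — 3 statements merged into one kernel-verified Lean document; each statement's English description precedes it below -/
import Mathlib

section
/- For every prime power q ≥ 2 there exists a bipartite egr(2(q³+q²+q+1), q²+q+1, 4, q³+q²) graph, i.e., a bipartite (q²+q+1)-regular simple graph on 2(q³+q²+q+1) vertices of girth 4 in which every edge lies on exactly q³+q² cycles of length 4. -/
/-!
The graph is the incidence graph of points and hyperplanes of `PG(d, q)`, for `d = 3`. Identifying a
hyperplane with the point whose coordinates are its coefficients, incidence becomes orthogonality of
projective points for the standard dot product, a symmetric relation. By rank-nullity, `m`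
independent points of `PG(d, q)` have `1 + q + ⋯ + q ^ (d - m)` common orthogonal points;
`m = 0, 1, 2` gives the number of points, the valency, and the number of common neighbours of two
vertices on the same side.

In any `(k + 1)`-regular graph where two distinct vertices with a common neighbour have `μ + 1` of
them, an edge `uv` lies on `k μ` cycles `u v b c` of length `4`: there are `k` choices for
`b ≠ u` adjacent to `v`, and then `c ≠ v` is one of the other common neighbours of `u` and `b`.
A `2`-colourable graph has no triangles, so its girth is then `4`.
-/

open SimpleGraph

/-- `G` is an edge-girth-regular graph with parameters `(n, k, g, lam)`:
a finite simple graph on `n` vertices, `k`-regular, of girth `g`, in which every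
edge lies on exactly `lam` cycles of length `g` (each such cycle corresponds to
exactly two closed walks based at an endpoint of the edge and traversing it). -/
def SimpleGraph.IsEGR {V : Type*} (G : SimpleGraph V) (n k g lam : ℕ) : Prop :=
  Finite V ∧ Nat.card V = n ∧
    (∀ v : V, (G.neighborSet v).ncard = k) ∧
    G.egirth = (g : ℕ∞) ∧
    ∀ u v : V, G.Adj u v →
      Nat.card {p : G.Walk u u // p.IsCycle ∧ p.length = g ∧ s(u, v) ∈ p.edges} = 2 * lam

/-- The number of closed walks of length `l` based at `v`. -/
noncomputable def SimpleGraph.closedWalkCount {V : Type*} (G : SimpleGraph V) (v : V) (l : ℕ) : ℕ :=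
  Nat.card {p : G.Walk v v // p.length = l}

/-- The number of cycle-free closed walks of length `l` based at `v`,
i.e. closed walks whose traversed edges form an acyclic subgraph. -/
noncomputable def SimpleGraph.cycleFreeClosedWalkCount {V : Type*} (G : SimpleGraph V) (v : V)
    (l : ℕ) : ℕ :=
  Nat.card {p : G.Walk v v // p.length = l ∧ p.toSubgraph.coe.IsAcyclic}

section FourCycles

variable {V : Type*} {G : SimpleGraph V} {u v : V}

/-- The ways `⟨b, c⟩` of completing an edge `uv` to a `4`-cycle `u v b c`. They form a sigma type,
so that they can be counted by first choosing `b` and then `c`. -/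
abbrev FourCycleCompletion (G : SimpleGraph V) (u v : V) : Type _ :=
  Σ b : ↥(G.neighborSet v \ {u}), ↥(G.commonNeighbors u b \ {v})

/-- The closed walk `u v b c u` obtained from a completion `⟨b, c⟩` of the edge `uv`. -/
def FourCycleCompletion.walk (huv : G.Adj u v) (x : FourCycleCompletion G u v) : G.Walk u u :=
  .cons huv (.cons x.1.2.1 (.cons x.2.2.1.2 (.cons x.2.2.1.1.symm .nil)))

lemma FourCycleCompletion.support_walk (huv : G.Adj u v) (x : FourCycleCompletion G u v) :
    (x.walk huv).support = [u, v, x.1, x.2, u] :=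
  rfl

lemma FourCycleCompletion.isCycle_walk (huv : G.Adj u v) (x : FourCycleCompletion G u v) :
    (x.walk huv).IsCycle := by
  obtain ⟨⟨b, hvb, hbu : b ≠ u⟩, ⟨c, ⟨huc, hbc⟩, hcv : c ≠ v⟩⟩ := x
  have hvb' : v ≠ b := G.ne_of_adj hvb
  have hcu : c ≠ u := (G.ne_of_adj huc).symm
  have hbc' : b ≠ c := G.ne_of_adj hbc
  refine Walk.isCycle_iff_isPath_tail_and_le_length.2 ⟨Walk.IsPath.mk' ?_, Nat.le_succ 3⟩
  change [v, b, c, u].Nodup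
  simp [hvb', hcv.symm, huv.ne', hbc', hbu, hcu]

lemma FourCycleCompletion.exists_walk_eq (huv : G.Adj u v) {p : G.Walk u u} (hp : p.IsCycle)
    (hlen : p.length = 4) (he : s(u, v) ∈ p.edges) :
    ∃ x : FourCycleCompletion G u v, x.walk huv = p ∨ (x.walk huv).reverse = p := by
  match p, hp, hlen, he with
  | .cons (v := a) hua (.cons (v := b) hab (.cons (v := c) hbc (.cons hcu .nil))), hp, _, he =>
    have hnodup := hp.support_nodup
    have hua' := hua.ne
    simp only [Walk.support_cons, Walk.support_nil, List.tail_cons, Walk.edges_cons,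
      Walk.edges_nil] at hnodup he
    obtain rfl | rfl : v = a ∨ v = c := by grind
    · exact ⟨⟨⟨b, hab, by grind⟩, ⟨c, ⟨hcu.symm, hbc⟩, by grind⟩⟩, .inl rfl⟩
    · exact ⟨⟨⟨b, hbc.symm, by grind⟩, ⟨a, ⟨hua, hab.symm⟩, by grind⟩⟩, .inr rfl⟩

lemma FourCycleCompletion.walk_injective (huv : G.Adj u v) :
    Function.Injective (walk huv) := by
  rintro ⟨⟨b, hb⟩, c, hc⟩ ⟨⟨b', hb'⟩, c', hc'⟩ h
  have hsupp := congrArg Walk.support h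
  simp only [support_walk, List.cons.injEq, and_true, true_and] at hsupp
  obtain ⟨rfl, rfl⟩ := hsupp
  rfl

lemma FourCycleCompletion.walk_ne_reverse_walk (huv : G.Adj u v) (x y : FourCycleCompletion G u v) :
    x.walk huv ≠ (y.walk huv).reverse := by
  intro h
  have hsupp := congrArg Walk.support h
  simp only [Walk.support_reverse, support_walk, List.reverse_cons, List.reverse_nil,
    List.nil_append, List.cons_append, List.cons.injEq, and_true, true_and] at hsupp
  exact y.2.2.2 hsupp.1.symm

lemma card_isCycle_length_four (huv : G.Adj u v) :
    Nat.card {p : G.Walk u u // p.IsCycle ∧ p.length = 4 ∧ s(u, v) ∈ p.edges} =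
      2 * Nat.card (FourCycleCompletion G u v) := by
  let orient : FourCycleCompletion G u v ⊕ FourCycleCompletion G u v → G.Walk u u :=
    Sum.elim (·.walk huv) (·.walk huv |>.reverse)
  have orient_injective : Function.Injective orient :=
    (FourCycleCompletion.walk_injective huv).sumElim
      (Walk.reverse_injective.comp (FourCycleCompletion.walk_injective huv))
      (FourCycleCompletion.walk_ne_reverse_walk huv)
  have range_orient :
      Set.range orient = {p | p.IsCycle ∧ p.length = 4 ∧ s(u, v) ∈ p.edges} := by
    refine Set.Subset.antisymm ?_ fun p ⟨hp, hlen, he⟩ => ?_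
    · rintro _ ⟨x | x, rfl⟩
      · exact ⟨x.isCycle_walk huv, rfl, by simp [orient, FourCycleCompletion.walk]⟩
      · exact ⟨(x.isCycle_walk huv).reverse, rfl, by simp [orient, FourCycleCompletion.walk]⟩
    · obtain ⟨x, hx | hx⟩ := FourCycleCompletion.exists_walk_eq huv hp hlen he
      exacts [⟨.inl x, hx⟩, ⟨.inr x, hx⟩]
  calc
    _ = Nat.card (Set.range orient) := by rw [range_orient]; rfl
    _ = Nat.card (Bool × FourCycleCompletion G u v) := by
      rw [Nat.card_range_of_injective orient_injective,
        Nat.card_congr (Equiv.boolProdEquivSum _)]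
    _ = 2 * Nat.card (FourCycleCompletion G u v) := by simp [Nat.card_prod]

lemma card_fourCycleCompletion {k μ : ℕ} (huv : G.Adj u v)
    (hdeg : (G.neighborSet v).ncard = k + 1)
    (hcommon : ∀ b ∈ G.neighborSet v \ {u}, (G.commonNeighbors u b).ncard = μ + 1) :
    Nat.card (FourCycleCompletion G u v) = k * μ := by
  have card_b : Nat.card ↥(G.neighborSet v \ {u}) = k := by
    rw [Nat.card_coe_set_eq, Set.ncard_sdiff_singleton_of_mem (G.mem_neighborSet _ _ |>.2 huv.symm),
      hdeg, Nat.add_sub_cancel]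
  have card_c (b : ↥(G.neighborSet v \ {u})) :
      Nat.card ↥(G.commonNeighbors u b \ {v}) = μ := by
    rw [Nat.card_coe_set_eq,
      Set.ncard_sdiff_singleton_of_mem (G.mem_commonNeighbors.2 ⟨huv, b.2.1.symm⟩),
      hcommon b b.2, Nat.add_sub_cancel]
  have : Finite ↥(G.neighborSet v \ {u}) :=
    ((Set.finite_of_ncard_ne_zero (by omega)).sdiff).to_subtype
  have (b : ↥(G.neighborSet v \ {u})) : Finite ↥(G.commonNeighbors u b \ {v}) :=
    ((Set.finite_of_ncard_ne_zero (by simp [hcommon b b.2])).sdiff).to_subtype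
  have := Fintype.ofFinite ↥(G.neighborSet v \ {u})
  rw [Nat.card_sigma, Finset.sum_congr rfl fun b _ => card_c b, Finset.sum_const, smul_eq_mul,
    Finset.card_univ, ← Nat.card_eq_fintype_card, card_b]

end FourCycles

section EdgeGirthRegular

variable {V : Type*} {G : SimpleGraph V}

lemma four_le_egirth_of_colorable_two (hG : G.Colorable 2) : 4 ≤ G.egirth := by
  refine le_egirth.2 fun u p hp => ?_
  obtain ⟨m, hm⟩ := two_colorable_iff_forall_loop_even.1 hG u p
  have := hp.three_le_length
  exact_mod_cast (by omega : 4 ≤ p.length)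

lemma isEGR_four_of_ncard_commonNeighbors [Finite V] [Nonempty V] {k μ : ℕ} (hk : k ≠ 0)
    (hμ : μ ≠ 0) (hcol : G.Colorable 2) (hdeg : ∀ v, (G.neighborSet v).ncard = k + 1)
    (hcommon : ∀ u v, u ≠ v → (G.commonNeighbors u v).Nonempty →
      (G.commonNeighbors u v).ncard = μ + 1) :
    G.IsEGR (Nat.card V) (k + 1) 4 (k * μ) := by
  have card_cycles (u v : V) (huv : G.Adj u v) :
      Nat.card {p : G.Walk u u // p.IsCycle ∧ p.length = 4 ∧ s(u, v) ∈ p.edges} =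
        2 * (k * μ) := by
    rw [card_isCycle_length_four huv, card_fourCycleCompletion huv (hdeg v)]
    exact fun b ⟨hvb, hbu⟩ => hcommon u b (Ne.symm hbu) ⟨v, huv, hvb.symm⟩
  refine ⟨inferInstance, rfl, hdeg, le_antisymm ?_ (four_le_egirth_of_colorable_two hcol),
    card_cycles⟩
  let u : V := Classical.arbitrary V
  obtain ⟨v, huv⟩ : (G.neighborSet u).Nonempty :=
    Set.nonempty_of_ncard_ne_zero (by simp [hdeg])
  have card_cycles_ne_zero : Nat.card {p : G.Walk u u //
      p.IsCycle ∧ p.length = 4 ∧ s(u, v) ∈ p.edges} ≠ 0 := by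
    simp [card_cycles u v huv, hk, hμ]
  obtain ⟨p, hp, hlen, -⟩ := (Nat.card_ne_zero.1 card_cycles_ne_zero).1
  exact hlen ▸ egirth_le_length hp

end EdgeGirthRegular

open scoped LinearAlgebra.Projectivization

section Orthogonality

variable {K : Type*} [Field K]

lemma ncard_setOf_submodule_le [Finite K] {E : Type*} [AddCommGroup E] [Module K E]
    (W : Submodule K E) :
    {x : ℙ K E | x.submodule ≤ W}.ncard =
      ∑ i ∈ Finset.range (Module.finrank K W), Nat.card K ^ i := by
  have range_map : Set.range (Projectivization.map W.subtype W.injective_subtype) =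
      {x : ℙ K E | x.submodule ≤ W} := by
    refine Set.Subset.antisymm ?_ fun x hx => ?_
    · rintro _ ⟨y, rfl⟩
      induction y with | h w hw =>
      rw [Projectivization.map_mk, Set.mem_ofPred_eq, Projectivization.submodule_mk,
        Submodule.span_singleton_le_iff_mem]
      exact w.2
    · induction x with | h w hw =>
      rw [Set.mem_ofPred_eq, Projectivization.submodule_mk,
        Submodule.span_singleton_le_iff_mem] at hx
      exact ⟨.mk K ⟨w, hx⟩ (by simpa using hw), rfl⟩
  rw [← range_map, ← Nat.card_coe_set_eq,
    Nat.card_range_of_injective (Projectivization.map_injective _ _),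
    Projectivization.card_of_finrank K W rfl]

variable {ι κ : Type*} [Fintype ι]

lemma forall_orthogonal_iff_submodule_le_ker (x : κ → ℙ K (ι → K)) (y : ℙ K (ι → K)) :
    (∀ i, (x i).orthogonal y) ↔
      y.submodule ≤ LinearMap.ker (Matrix.of fun i => (x i).rep).mulVecLin := by
  induction y with | h w hw =>
  rw [Projectivization.submodule_mk, Submodule.span_singleton_le_iff_mem, LinearMap.mem_ker,
    funext_iff]
  refine forall_congr' fun i => ?_
  conv_lhs => rw [← (x i).mk_rep]
  exact Projectivization.orthogonal_mk _ _

lemma ncard_setOf_forall_orthogonal [Finite K] [Fintype κ] {x : κ → ℙ K (ι → K)}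
    (hx : Projectivization.Independent x) :
    {y | ∀ i, (x i).orthogonal y}.ncard =
      ∑ i ∈ Finset.range (Fintype.card ι - Fintype.card κ), Nat.card K ^ i := by
  let M : Matrix κ ι K := Matrix.of fun i => (x i).rep
  have rank_M : M.rank = Fintype.card κ :=
    LinearIndependent.rank_matrix (Projectivization.independent_iff.1 hx)
  have finrank_ker : Module.finrank K (LinearMap.ker M.mulVecLin) =
      Fintype.card ι - Fintype.card κ := by
    have rank_nullity := M.mulVecLin.finrank_range_add_finrank_ker
    rw [← Matrix.rank, rank_M, Module.finrank_fintype_fun_eq_card] at rank_nullity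
    omega
  simp only [forall_orthogonal_iff_submodule_le_ker]
  rw [ncard_setOf_submodule_le, finrank_ker]

lemma ncard_setOf_orthogonal [Finite K] (x : ℙ K (ι → K)) :
    {y | x.orthogonal y}.ncard = ∑ i ∈ Finset.range (Fintype.card ι - 1), Nat.card K ^ i := by
  have hx : Projectivization.Independent ![x] :=
    Projectivization.independent_iff.2 (.of_subsingleton 0 x.rep_nonzero)
  simpa using ncard_setOf_forall_orthogonal hx

lemma ncard_setOf_orthogonal_and_orthogonal [Finite K] {x y : ℙ K (ι → K)} (hxy : x ≠ y) :
    {z | x.orthogonal z ∧ y.orthogonal z}.ncard =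
      ∑ i ∈ Finset.range (Fintype.card ι - 2), Nat.card K ^ i := by
  simpa [Fin.forall_fin_two] using
    ncard_setOf_forall_orthogonal ((Projectivization.independent_pair_iff_ne x y).2 hxy)

end Orthogonality

/-- The point-hyperplane incidence graph of the projective space over `K` with homogeneous
coordinates indexed by `ι`. The Boolean distinguishes points from hyperplanes, and a hyperplane is
represented by the projective point of its coefficients. -/
def incidenceGraph (K ι : Type*) [Field K] [Fintype ι] : SimpleGraph (Bool × ℙ K (ι → K)) where
  Adj u v := u.1 ≠ v.1 ∧ u.2.orthogonal v.2
  symm := ⟨fun _ _ h => ⟨h.1.symm, Projectivization.orthogonal_comm.1 h.2⟩⟩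
  loopless := ⟨fun _ h => h.1 rfl⟩

section IncidenceGraph

variable {K ι : Type*} [Field K] [Fintype ι]

lemma incidenceGraph_colorable_two : (incidenceGraph K ι).Colorable 2 :=
  (Coloring.mk (G := incidenceGraph K ι) Prod.fst fun h => h.1).colorable

lemma neighborSet_incidenceGraph (u : Bool × ℙ K (ι → K)) :
    (incidenceGraph K ι).neighborSet u = {!u.1} ×ˢ {y | u.2.orthogonal y} := by
  ext ⟨j, y⟩
  simp [incidenceGraph, Bool.eq_not, eq_comm]

lemma ncard_neighborSet_incidenceGraph [Finite K] (u : Bool × ℙ K (ι → K)) :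
    ((incidenceGraph K ι).neighborSet u).ncard =
      ∑ i ∈ Finset.range (Fintype.card ι - 1), Nat.card K ^ i := by
  rw [neighborSet_incidenceGraph, Set.ncard_prod, Set.ncard_singleton, one_mul,
    ncard_setOf_orthogonal]

lemma ncard_commonNeighbors_incidenceGraph [Finite K] {u v : Bool × ℙ K (ι → K)} (huv : u ≠ v)
    (hne : ((incidenceGraph K ι).commonNeighbors u v).Nonempty) :
    ((incidenceGraph K ι).commonNeighbors u v).ncard =
      ∑ i ∈ Finset.range (Fintype.card ι - 2), Nat.card K ^ i := by
  obtain ⟨i, x⟩ := u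
  obtain ⟨j, y⟩ := v
  obtain ⟨z, hxz, hyz⟩ := hne
  obtain rfl : i = j := (Bool.eq_not_of_ne hxz.1).trans (Bool.eq_not_of_ne hyz.1).symm
  have hxy : x ≠ y := fun h => huv (h ▸ rfl)
  rw [commonNeighbors_eq, neighborSet_incidenceGraph, neighborSet_incidenceGraph,
    ← Set.prod_inter, Set.ncard_prod, Set.ncard_singleton, one_mul]
  exact ncard_setOf_orthogonal_and_orthogonal hxy

lemma incidenceGraph_isEGR [Finite K] {n : ℕ} (hι : Fintype.card ι = n + 4) :
    (incidenceGraph K ι).IsEGR (2 * ∑ i ∈ Finset.range (n + 4), Nat.card K ^ i)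
      (∑ i ∈ Finset.range (n + 3), Nat.card K ^ i) 4
      (Nat.card K ^ 2 * (∑ i ∈ Finset.range (n + 2), Nat.card K ^ i) *
        ∑ i ∈ Finset.range (n + 1), Nat.card K ^ i) := by
  have : Nonempty ι := Fintype.card_pos_iff.1 (by omega)
  have card_vertices : Nat.card (Bool × ℙ K (ι → K)) =
      2 * ∑ i ∈ Finset.range (n + 4), Nat.card K ^ i := by
    rw [Nat.card_prod, Projectivization.card_of_finrank K _ (by simpa using hι)]
    simp
  have factor_ne_zero (m : ℕ) : Nat.card K * ∑ i ∈ Finset.range (m + 1), Nat.card K ^ i ≠ 0 :=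
    mul_ne_zero Nat.card_pos.ne' (geom_sum_pos (Nat.zero_le _) m.succ_ne_zero).ne'
  have isEGR := isEGR_four_of_ncard_commonNeighbors (factor_ne_zero (n + 1)) (factor_ne_zero n)
    (incidenceGraph_colorable_two (K := K) (ι := ι))
    (fun u => by rw [ncard_neighborSet_incidenceGraph, hι, ← geom_sum_succ]; rfl)
    (fun u v huv hne => by
      rw [ncard_commonNeighbors_incidenceGraph huv hne, hι, ← geom_sum_succ]; rfl)
  convert isEGR using 1
  · exact card_vertices.symm
  · exact geom_sum_succ
  · ring

end IncidenceGraph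

/-- The projective dimension is `n + 3`: distinct lines of a projective plane meet only once, so its
incidence graph has no `4`-cycles. -/
theorem pencil_bipartite_egr_general (q : ℕ) (hq : IsPrimePow q) (n : ℕ) :
    ∃ (V : Type) (G : SimpleGraph V), G.Colorable 2 ∧
      G.IsEGR (2 * ∑ i ∈ Finset.range (n + 4), q ^ i) (∑ i ∈ Finset.range (n + 3), q ^ i) 4
        (q ^ 2 * (∑ i ∈ Finset.range (n + 2), q ^ i) * ∑ i ∈ Finset.range (n + 1), q ^ i) := by
  obtain ⟨p, m, hp, hm, rfl⟩ := (isPrimePow_nat_iff q).1 hq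
  have : Fact p.Prime := ⟨hp⟩
  refine ⟨_, incidenceGraph (GaloisField p m) (Fin (n + 4)), incidenceGraph_colorable_two, ?_⟩
  rw [← GaloisField.card p m hm.ne']
  exact incidenceGraph_isEGR (Fintype.card_fin _)

/-- For every prime power `q ≥ 2` there exists a bipartite
`egr(2(q³+q²+q+1), q²+q+1, 4, q³+q²)` graph, arising from a pencil of elliptic
quadrics in `PG(3,q)`. -/
theorem pencil_bipartite_egr (q : ℕ) (hq : IsPrimePow q) (hq2 : 2 ≤ q) :
    ∃ (V : Type) (G : SimpleGraph V), G.Colorable 2 ∧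
      G.IsEGR (2 * (q ^ 3 + q ^ 2 + q + 1)) (q ^ 2 + q + 1) 4 (q ^ 3 + q ^ 2) := by
  obtain ⟨V, G, hcol, hG⟩ := pencil_bipartite_egr_general q hq 0
  exact ⟨V, G, hcol, by convert hG using 1 <;> simp [Finset.sum_range_succ] <;> ring⟩
end

section
/- Let k ≥ 3 and let G be a bipartite egr(n,k,4,λ) graph. Then n·(λ+k−1) ≥ 2(k³−2k²+2k−1+λ). -/
/-!
Fix a vertex `v`, let `c w` be the number of common neighbours of `v` and `w`, and let `S v` be the
set of vertices `w ≠ v` with `c w ≠ 0`. Counting paths `v a w` gives `∑_{w ∈ S v} c w = k (k - 1)`.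
Counting triples `(a, w, b)` with `a`, `b` common neighbours of `v` and `w` gives
`∑_{w ∈ S v} (c w)² ≤ k (k - 1) + k λ`: the degenerate triples `a = b` contribute `k (k - 1)`, and
the others are 4-cycles, of which there are at most `λ` through each edge `va`. By Cauchy-Schwarz
`k (k - 1)² ≤ |S v| (k - 1 + λ)`.

For the two ends of an edge `uv` the sets `{u} ∪ S u` and `{v} ∪ S v` are disjoint, because a common
element would lie on a closed walk of length 5, which a bipartite graph does not have. So
`|S u| + |S v| + 2 ≤ n`, and the two bounds can be added.
-/

open SimpleGraph

open Finset

lemma isCycle_cons_four {V : Type*} {G : SimpleGraph V} {v a w b : V} (hva : G.Adj v a)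
    (haw : G.Adj a w) (hwb : G.Adj w b) (hbv : G.Adj b v) (hwv : w ≠ v) (hba : b ≠ a) :
    (Walk.cons hva (.cons haw (.cons hwb (.cons hbv .nil)))).IsCycle := by
  have := hva.ne
  have := haw.ne
  have := hwb.ne
  have := hbv.ne
  simp only [Walk.cons_isCycle_iff, Walk.cons_isPath_iff, Walk.support_cons, Walk.support_nil,
    Walk.edges_cons, Walk.edges_nil, List.mem_cons, Sym2.eq_iff]
  grind [Walk.IsPath.nil]

section LocallyFinite

variable {V : Type*} [DecidableEq V] (G : SimpleGraph V) [G.LocallyFinite]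

/-- The codegree of `v` and `w`, their number of common neighbours; `codegree G v v` is the degree
of `v`. -/
def codegree (v w : V) : ℕ := #(G.neighborFinset v ∩ G.neighborFinset w)

/-- The end vertices of the walks of length two from `v`, which include `v` itself unless `v` is
isolated. -/
def twoStepFinset (v : V) : Finset V := (G.neighborFinset v).biUnion fun a => G.neighborFinset a

/-- The pairs `(w, b)` for which `v a w b` is a 4-cycle, given an edge `va`. -/
def fourCycleCompletions (v a : V) : Finset (Σ _ : V, V) :=
  ((G.neighborFinset a).erase v).sigma
    fun w => (G.neighborFinset v ∩ G.neighborFinset w).erase a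

variable {G} {u v w a b : V} {k lam : ℕ}

lemma mem_twoStepFinset : w ∈ twoStepFinset G v ↔ ∃ a, G.Adj v a ∧ G.Adj a w := by
  simp [twoStepFinset]

lemma self_mem_twoStepFinset (h : G.Adj v a) : v ∈ twoStepFinset G v :=
  mem_twoStepFinset.2 ⟨a, h, h.symm⟩

lemma mem_fourCycleCompletions :
    ⟨w, b⟩ ∈ fourCycleCompletions G v a ↔
      (w ≠ v ∧ G.Adj a w) ∧ b ≠ a ∧ G.Adj v b ∧ G.Adj w b := by
  simp [fourCycleCompletions]

lemma two_mul_card_fourCycleCompletions_le (hva : G.Adj v a) :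
    2 * #(fourCycleCompletions G v a) ≤
      Nat.card {p : G.Walk v v // p.IsCycle ∧ p.length = 4 ∧ s(v, a) ∈ p.edges} := by
  let FourCycle := {p : G.Walk v v // p.IsCycle ∧ p.length = 4 ∧ s(v, a) ∈ p.edges}
  have : Finite FourCycle :=
    (Set.toFinite {p : G.Walk v v | p.length = 4}).subset fun _ hp => hp.2.1
  let forward (x : fourCycleCompletions G v a) : FourCycle :=
    have hx := mem_fourCycleCompletions.1 x.2
    ⟨.cons hva (.cons hx.1.2 (.cons hx.2.2.2 (.cons hx.2.2.1.symm .nil))),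
      isCycle_cons_four _ _ _ _ hx.1.1 hx.2.1, rfl, by simp⟩
  let backward (x : fourCycleCompletions G v a) : FourCycle :=
    ⟨(forward x).1.reverse, (forward x).2.1.reverse, by simp [(forward x).2.2.1],
      by simpa using (forward x).2.2.2⟩
  have forward_support (x) : (forward x).1.support = [v, a, x.1.1, x.1.2, v] := rfl
  have backward_support (x) : (backward x).1.support = [v, x.1.2, x.1.1, a, v] := by
    simp [backward, Walk.support_reverse, forward_support]
  have forward_injective : Function.Injective forward := fun x y hxy => by
    have := congrArg (·.1.support) hxy
    grind
  have backward_injective : Function.Injective backward := fun x y hxy => by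
    have := congrArg (·.1.support) hxy
    grind
  have forward_ne_backward (x y) : forward x ≠ backward y := fun hxy => by
    have := congrArg (·.1.support) hxy
    have := (mem_fourCycleCompletions.1 y.2).2.1
    grind
  simpa [two_mul] using Nat.card_le_card_of_injective _
    (forward_injective.sumElim backward_injective forward_ne_backward)

/-- Both sides sum `f w` over the paths `v a w`. -/
lemma sum_codegree_mul (f : V → ℕ) :
    ∑ w ∈ (twoStepFinset G v).erase v, codegree G v w * f w =
      ∑ a ∈ G.neighborFinset v, ∑ w ∈ (G.neighborFinset a).erase v, f w := by
  calc ∑ w ∈ (twoStepFinset G v).erase v, codegree G v w * f w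
      = ∑ w ∈ (twoStepFinset G v).erase v,
          ∑ _a ∈ G.neighborFinset v ∩ G.neighborFinset w, f w := by
        simp [codegree]
    _ = _ := sum_comm' fun w a => by
        simp only [mem_erase, mem_inter, mem_neighborFinset, mem_twoStepFinset]
        grind [SimpleGraph.adj_comm]

lemma card_neighborFinset_erase (hreg : G.IsRegularOfDegree k) (h : G.Adj v a) :
    #((G.neighborFinset a).erase v) = k - 1 := by
  rw [card_erase_of_mem (by simpa using h.symm), card_neighborFinset_eq_degree, hreg]

lemma sum_codegree (hreg : G.IsRegularOfDegree k) :
    ∑ w ∈ (twoStepFinset G v).erase v, codegree G v w = k * (k - 1) := by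
  calc ∑ w ∈ (twoStepFinset G v).erase v, codegree G v w
      = ∑ a ∈ G.neighborFinset v, #((G.neighborFinset a).erase v) := by
        simpa only [mul_one, card_eq_sum_ones] using sum_codegree_mul fun _ => 1
    _ = ∑ _a ∈ G.neighborFinset v, (k - 1) :=
        sum_congr rfl fun a ha => card_neighborFinset_erase hreg (by simpa using ha)
    _ = k * (k - 1) := by simp [hreg.degree_eq v]

/-- Among the common neighbours of `v` and `w`, the vertex `a` itself is set apart; each of the
others completes the path `v a w` to a 4-cycle. -/
lemma sum_codegree_neighborFinset_erase (h : G.Adj v a) :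
    ∑ w ∈ (G.neighborFinset a).erase v, codegree G v w =
      #((G.neighborFinset a).erase v) + #(fourCycleCompletions G v a) := by
  rw [fourCycleCompletions, card_sigma, card_eq_sum_ones, ← sum_add_distrib]
  refine sum_congr rfl fun w hw => ?_
  have ha : a ∈ G.neighborFinset v ∩ G.neighborFinset w := by
    simpa [h, G.adj_comm w] using (mem_erase.1 hw).2
  rw [codegree, add_comm, card_erase_add_one ha]

lemma sum_codegree_sq_le (hreg : G.IsRegularOfDegree k)
    (hlam : ∀ a, G.Adj v a → #(fourCycleCompletions G v a) ≤ lam) :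
    ∑ w ∈ (twoStepFinset G v).erase v, codegree G v w ^ 2 ≤ k * (k - 1 + lam) := by
  calc ∑ w ∈ (twoStepFinset G v).erase v, codegree G v w ^ 2
      = ∑ a ∈ G.neighborFinset v, ∑ w ∈ (G.neighborFinset a).erase v, codegree G v w := by
        simpa only [sq] using sum_codegree_mul (codegree G v)
    _ ≤ ∑ _a ∈ G.neighborFinset v, (k - 1 + lam) := sum_le_sum fun a ha => by
        have hva : G.Adj v a := by simpa using ha
        rw [sum_codegree_neighborFinset_erase hva, card_neighborFinset_erase hreg hva]
        gcongr
        exact hlam a hva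
    _ = k * (k - 1 + lam) := by simp [hreg.degree_eq v]

lemma mul_sq_le_card_twoStepFinset_erase_mul (hreg : G.IsRegularOfDegree k)
    (hlam : ∀ a, G.Adj v a → #(fourCycleCompletions G v a) ≤ lam) :
    k * (k - 1) ^ 2 ≤ #((twoStepFinset G v).erase v) * (k - 1 + lam) := by
  obtain rfl | hk := k.eq_zero_or_pos
  · simp
  refine Nat.le_of_mul_le_mul_left ?_ hk
  calc k * (k * (k - 1) ^ 2)
      = (∑ w ∈ (twoStepFinset G v).erase v, codegree G v w) ^ 2 := by
        rw [sum_codegree hreg]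
        ring
    _ ≤ #((twoStepFinset G v).erase v) *
          ∑ w ∈ (twoStepFinset G v).erase v, codegree G v w ^ 2 := sq_sum_le_card_mul_sum_sq
    _ ≤ #((twoStepFinset G v).erase v) * (k * (k - 1 + lam)) := by
        gcongr
        exact sum_codegree_sq_le hreg hlam
    _ = k * (#((twoStepFinset G v).erase v) * (k - 1 + lam)) := by ring

lemma disjoint_twoStepFinset (h5 : ∀ p : G.Walk u u, p.length ≠ 5) (huv : G.Adj u v) :
    Disjoint (twoStepFinset G u) (twoStepFinset G v) := by
  refine disjoint_left.2 fun w hu hv => ?_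
  obtain ⟨a, hua, haw⟩ := mem_twoStepFinset.1 hu
  obtain ⟨b, hvb, hbw⟩ := mem_twoStepFinset.1 hv
  exact h5 (.cons hua (.cons haw (.cons hbw.symm (.cons hvb.symm (.cons huv.symm .nil))))) rfl

lemma card_twoStepFinset_erase_add_le [Finite V] (h5 : ∀ p : G.Walk u u, p.length ≠ 5)
    (huv : G.Adj u v) :
    #((twoStepFinset G u).erase u) + #((twoStepFinset G v).erase v) + 2 ≤ Nat.card V := by
  have := Fintype.ofFinite V
  calc #((twoStepFinset G u).erase u) + #((twoStepFinset G v).erase v) + 2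
      = #(twoStepFinset G u) + #(twoStepFinset G v) := by
        rw [← card_erase_add_one (self_mem_twoStepFinset huv),
          ← card_erase_add_one (self_mem_twoStepFinset huv.symm)]
        ring
    _ = #(twoStepFinset G u ∪ twoStepFinset G v) :=
        (card_union_of_disjoint (disjoint_twoStepFinset h5 huv)).symm
    _ ≤ Nat.card V := by
        rw [Nat.card_eq_fintype_card]
        exact card_le_univ _

end LocallyFinite

theorem bipartite_egr_girth4_lower_bound_general (k lam : ℕ) {V : Type*} [Finite V]
    (G : SimpleGraph V) (hG : G ≠ ⊥) (hreg : ∀ v, (G.neighborSet v).ncard = k)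
    (h5 : ∀ v, ∀ p : G.Walk v v, p.length ≠ 5)
    (hcyc : ∀ u v, G.Adj u v →
      Nat.card {p : G.Walk u u // p.IsCycle ∧ p.length = 4 ∧ s(u, v) ∈ p.edges} ≤ 2 * lam) :
    (Nat.card V : ℤ) * (lam + k - 1) ≥ 2 * ((k : ℤ) ^ 3 - 2 * k ^ 2 + 2 * k - 1 + lam) := by
  classical
  have := Fintype.ofFinite V
  have hdeg : G.IsRegularOfDegree k := fun v => by
    rw [← hreg v, Set.ncard_eq_toFinset_card', ← card_neighborFinset_eq_degree, neighborFinset]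
  have hlam (v a) (hva : G.Adj v a) : #(fourCycleCompletions G v a) ≤ lam :=
    Nat.le_of_mul_le_mul_left
      ((two_mul_card_fourCycleCompletions_le hva).trans (hcyc v a hva)) two_pos
  obtain ⟨u, v, huv⟩ := ne_bot_iff_exists_adj.1 hG
  have hk : 1 ≤ k := hdeg u ▸ (G.degree_pos_iff_exists_adj u).2 ⟨v, huv⟩
  have hu := mul_sq_le_card_twoStepFinset_erase_mul hdeg (hlam u)
  have hv := mul_sq_le_card_twoStepFinset_erase_mul hdeg (hlam v)
  have hn := card_twoStepFinset_erase_add_le (h5 u) huv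
  have hsum := Nat.mul_le_mul_right (k - 1 + lam) hn
  zify [hk] at hu hv hsum
  linarith

/-- Eigenvalue lower bound for bipartite edge-girth-regular graphs of girth 4:
if `G` is a bipartite `egr(n, k, 4, λ)` graph with `k ≥ 3`, then
`n(λ + k - 1) ≥ 2(k³ - 2k² + 2k - 1 + λ)`. -/
theorem bipartite_egr_girth4_lower_bound (n k lam : ℕ) (hk : 3 ≤ k) {V : Type*}
    (G : SimpleGraph V) (hbip : G.Colorable 2) (h : G.IsEGR n k 4 lam) :
    (n : ℤ) * (lam + k - 1) ≥ 2 * ((k : ℤ) ^ 3 - 2 * k ^ 2 + 2 * k - 1 + lam) := by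
  obtain ⟨_, rfl, hreg, hgirth, hcyc⟩ := h
  exact bipartite_egr_girth4_lower_bound_general k lam G (by rintro rfl; simp at hgirth) hreg
    (fun v p hp => absurd (two_colorable_iff_forall_loop_even.1 hbip v p) (by rw [hp]; decide))
    (fun u v huv => (hcyc u v huv).le)
end

section
/- Let k ≥ 3, n > 2, and let G be a bipartite egr(n,k,4,λ) graph satisfying n·(λ+k−1) = 2(k³−2k²+2k−1+λ). Then the characteristic polynomial over ℝ of the adjacency matrix of G equals (X−k)·(X+k)·(X² − (nk−2k²)/(n−2))^{(n−2)/2}; equivalently, the spectrum of G consists of the eigenvalues k and −k, each with multiplicity 1, and √((nk−2k²)/(n−2)) and −√((nk−2k²)/(n−2)), each with multiplicity (n−2)/2. -/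
/-!
If an edge `uv` lies on `λ` four-cycles, then `λ` paths of length three join `u` to `v`. The other
walks `u, a, b, v` have `a = v` or `b = u`, so for a `k`-regular graph with adjacency matrix `A` the
`(u, v)`-entry of `A ^ 3` is `λ + 2k - 1`, and `tr (A ^ 4) = nk(λ + 2k - 1)`. Also `tr A = 0` and
`tr (A ^ 2) = nk`.

The all-ones vector and the `±1` vector of the bipartition are eigenvectors for `k` and `-k`. The
remaining `n - 2` eigenvalues have sum `0` and mean square `μ = (nk - 2k²) / (n - 2)`, and the
relation between `n`, `k` and `λ` says exactly that the mean of their fourth powers is `μ²`. This is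
equality in Cauchy–Schwarz, so all their squares equal `μ`; as they sum to `0`, both square roots of
`μ` occur equally often.
-/

open SimpleGraph

open Polynomial

/-! ### Counting cycles through an edge -/

section Walks

variable {V : Type*} {G : SimpleGraph V} {u v : V}

theorem mem_edges_iff_snd_eq_or_penultimate_eq {p : G.Walk u u} (hp : p.IsCycle) :
    s(u, v) ∈ p.edges ↔ p.snd = v ∨ p.penultimate = v := by
  constructor
  · cases p with
    | nil => simp
    | cons h q =>
      rw [Walk.edges_cons, List.mem_cons, Walk.snd_cons]
      rintro (he | he)
      · exact .inl (Sym2.congr_right.1 he).symm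
      · have hq := ((Walk.cons_isCycle_iff q h).1 hp).1
        refine .inr ?_
        rw [hq.eq_penultimate_of_mem_edges he, Walk.penultimate_cons_of_not_nil]
        intro hnil
        simp [Walk.edges_eq_nil.2 hnil] at he
  · rintro (rfl | rfl)
    · exact p.mk_start_snd_mem_edges hp.not_nil
    · exact Sym2.eq_swap ▸ p.mk_penultimate_end_mem_edges hp.not_nil

/-- The cycles of length `l + 1` based at `u` whose first step goes to `v` correspond to the paths
of length `l` from `v` back to `u`. -/
def cyclesSndEquivPaths (h : G.Adj u v) {l : ℕ} (hl : 2 ≤ l) :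
    {p : G.Walk u u // (p.IsCycle ∧ p.length = l + 1) ∧ p.snd = v} ≃
      {p : G.Walk v u // p.IsPath ∧ p.length = l} where
  toFun p := ⟨p.1.tail.copy p.2.2 rfl, by simpa using p.2.1.1.isPath_tail, by
    have := Walk.length_tail_add_one p.2.1.1.not_nil
    rw [Walk.length_copy]
    lia⟩
  invFun q := ⟨.cons h q.1, ⟨Walk.isCycle_iff_isPath_tail_and_le_length.2
    ⟨by simpa using q.2.1, by simp [q.2.2]; lia⟩, by simp [q.2.2]⟩, by simp⟩
  left_inv := by
    rintro ⟨p, ⟨hc, hl⟩, rfl⟩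
    exact Subtype.ext (p.cons_tail_eq hc.not_nil)
  right_inv | ⟨q, _⟩ => Subtype.ext (by cases q <;> rfl)

/-- Reversal turns the cycles at `u` whose last step comes from `v` into those whose first step goes
to `v`. -/
def cyclesPenultimateEquivCyclesSnd (u v : V) (l : ℕ) :
    {p : G.Walk u u // (p.IsCycle ∧ p.length = l) ∧ p.penultimate = v} ≃
      {p : G.Walk u u // (p.IsCycle ∧ p.length = l) ∧ p.snd = v} :=
  Equiv.subtypeEquiv ⟨Walk.reverse, Walk.reverse, Walk.reverse_reverse, Walk.reverse_reverse⟩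
    fun p => by simp

theorem card_isCycle_mem_edges (h : G.Adj u v) {l : ℕ} (hl : 2 ≤ l) :
    Nat.card {p : G.Walk u u // p.IsCycle ∧ p.length = l + 1 ∧ s(u, v) ∈ p.edges} =
      2 * Nat.card {p : G.Walk v u // p.IsPath ∧ p.length = l} := by
  classical
  let snds (p : G.Walk u u) := (p.IsCycle ∧ p.length = l + 1) ∧ p.snd = v
  let penultimates (p : G.Walk u u) := (p.IsCycle ∧ p.length = l + 1) ∧ p.penultimate = v
  have hdisj : Disjoint snds penultimates :=
    Pi.disjoint_iff.2 fun p => Prop.disjoint_iff.2 fun ⟨hs, hp⟩ =>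
      hs.1.1.snd_ne_penultimate (hs.2.trans hp.2.symm)
  have hsplit (p : G.Walk u u) :
      (p.IsCycle ∧ p.length = l + 1 ∧ s(u, v) ∈ p.edges) ↔ snds p ∨ penultimates p := by
    rw [← and_assoc, ← and_or_left]
    exact and_congr_right fun hp => mem_edges_iff_snd_eq_or_penultimate_eq hp.1
  let e := cyclesSndEquivPaths h hl
  calc
    _ = Nat.card ({p // snds p} ⊕ {p // penultimates p}) :=
      Nat.card_congr ((Equiv.subtypeEquivRight hsplit).trans (subtypeOrEquiv _ _ hdisj))
    _ = Nat.card (Bool × {p : G.Walk v u // p.IsPath ∧ p.length = l}) :=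
      Nat.card_congr <| (e.sumCongr ((cyclesPenultimateEquivCyclesSnd u v _).trans e)).trans
        (Equiv.boolProdEquivSum _).symm
    _ = _ := by rw [Nat.card_prod, Nat.card_eq_fintype_card, Fintype.card_bool]

/-- Walks `u, a, b, v` of length three correspond to pairs `(a, b)` of adjacent neighbours of `u`
and `v` respectively. -/
def walkLengthThreeEquiv (u v : V) :
    {p : G.Walk u v // p.length = 3} ≃
      {t : V × V // G.Adj u t.1 ∧ G.Adj v t.2 ∧ G.Adj t.1 t.2} where
  toFun p := ⟨(p.1.snd, p.1.penultimate), match p with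
    | ⟨.cons h₁ (.cons h₂ (.cons h₃ .nil)), _⟩ => ⟨h₁, h₃.symm, h₂⟩⟩
  invFun t := ⟨.cons t.2.1 (.cons t.2.2.2 (.cons t.2.2.1.symm .nil)), rfl⟩
  left_inv | ⟨.cons _ (.cons _ (.cons _ .nil)), _⟩ => rfl
  right_inv _ := rfl

theorem isPath_iff_of_length_eq_three (h : u ≠ v) {p : G.Walk u v} (hp : p.length = 3) :
    p.IsPath ↔ p.snd ≠ v ∧ p.penultimate ≠ u := by
  match p, hp with
  | .cons h₁ (.cons h₂ (.cons h₃ .nil)), _ =>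
    simp [Walk.cons_isPath_iff, h₁.ne, h₂.ne, h₃.ne, h, Walk.penultimate, @eq_comm _ u]

/-- Paths `u, a, b, v` of length three correspond to pairs `(a, b)` as in `walkLengthThreeEquiv`
with `a ≠ v` and `b ≠ u`. -/
def pathLengthThreeEquiv (h : u ≠ v) :
    {p : G.Walk u v // p.IsPath ∧ p.length = 3} ≃
      {t : V × V // (G.Adj u t.1 ∧ G.Adj v t.2 ∧ G.Adj t.1 t.2) ∧ t.1 ≠ v ∧ t.2 ≠ u} :=
  calc
    _ ≃ {p : G.Walk u v // p.length = 3 ∧ p.IsPath} := Equiv.subtypeEquivRight fun _ => and_comm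
    _ ≃ {p : {p : G.Walk u v // p.length = 3} // p.1.IsPath} :=
      (Equiv.subtypeSubtypeEquivSubtypeInter _ _).symm
    _ ≃ {t : {t : V × V // G.Adj u t.1 ∧ G.Adj v t.2 ∧ G.Adj t.1 t.2} // t.1.1 ≠ v ∧ t.1.2 ≠ u} :=
      (walkLengthThreeEquiv u v).subtypeEquiv fun p => isPath_iff_of_length_eq_three h p.2
    _ ≃ _ := Equiv.subtypeSubtypeEquivSubtypeInter _ fun t : V × V => t.1 ≠ v ∧ t.2 ≠ u

theorem card_walk_length_three_add_one [G.LocallyFinite] (h : G.Adj u v) :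
    Nat.card {p : G.Walk u v // p.length = 3} + 1 =
      Nat.card {p : G.Walk u v // p.IsPath ∧ p.length = 3} + G.degree u + G.degree v := by
  classical
  let T := {t ∈ G.neighborFinset u ×ˢ G.neighborFinset v | G.Adj t.1 t.2}
  let walksEquiv : {p : G.Walk u v // p.length = 3} ≃ T :=
    (walkLengthThreeEquiv u v).trans (Equiv.subtypeEquivRight fun t => by simp [T, and_assoc])
  let pathsEquiv : {p : G.Walk u v // p.IsPath ∧ p.length = 3} ≃
      {t ∈ T | t.1 ≠ v ∧ t.2 ≠ u} :=
    (pathLengthThreeEquiv h.ne).trans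
      (Equiv.subtypeEquivRight fun t => by simp [T, and_assoc])
  have hdegenerate : {t ∈ T | ¬ (t.1 ≠ v ∧ t.2 ≠ u)} =
      {v} ×ˢ G.neighborFinset v ∪ G.neighborFinset u ×ˢ {u} := by
    ext ⟨a, b⟩
    simp only [T, Finset.mem_filter, Finset.mem_product, Finset.mem_union, Finset.mem_singleton,
      mem_neighborFinset]
    grind [G.adj_comm]
  have hinter : ({v} ×ˢ G.neighborFinset v) ∩ (G.neighborFinset u ×ˢ {u}) = {(v, u)} := by
    ext ⟨a, b⟩
    simp only [Finset.mem_inter, Finset.mem_product, Finset.mem_singleton, mem_neighborFinset,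
      Prod.mk.injEq]
    grind [G.adj_comm]
  have hunion := Finset.card_union_add_card_inter
    ({v} ×ˢ G.neighborFinset v) (G.neighborFinset u ×ˢ {u})
  have hT := T.card_filter_add_card_filter_not (fun t => t.1 ≠ v ∧ t.2 ≠ u)
  rw [hdegenerate] at hT
  simp only [hinter, Finset.card_product, Finset.card_singleton, card_neighborFinset_eq_degree]
    at hunion
  rw [Nat.card_congr walksEquiv, Nat.card_congr pathsEquiv, Nat.card_eq_finsetCard,
    Nat.card_eq_finsetCard]
  lia

theorem adjMatrix_pow_three_apply_add_one (R : Type*) [Semiring R] [Fintype V] [DecidableEq V]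
    [DecidableRel G.Adj] (h : G.Adj u v) :
    (G.adjMatrix R ^ 3) u v + 1 =
      Nat.card {p : G.Walk u v // p.IsPath ∧ p.length = 3} + G.degree u + G.degree v := by
  rw [adjMatrix_pow_apply_eq_card_walk, ← Nat.card_eq_fintype_card]
  exact_mod_cast congrArg (Nat.cast (R := R)) (card_walk_length_three_add_one h)

end Walks

section Traces

variable {V : Type*} [Fintype V] [DecidableEq V] {G : SimpleGraph V} [DecidableRel G.Adj]

theorem trace_adjMatrix_pow_two (R : Type*) [Semiring R] :
    (G.adjMatrix R ^ 2).trace = ∑ v, (G.degree v : R) := by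
  simp only [Matrix.trace, Matrix.diag_apply, pow_two, adjMatrix_mul_self_apply_self]

theorem trace_adjMatrix_pow_four (R : Type*) [Ring R] {k lam : ℕ}
    (hreg : G.IsRegularOfDegree k)
    (hlam : ∀ u v, G.Adj u v →
      Nat.card {p : G.Walk u u // p.IsCycle ∧ p.length = 4 ∧ s(u, v) ∈ p.edges} = 2 * lam) :
    (G.adjMatrix R ^ 4).trace = Fintype.card V * (k * (lam + 2 * k - 1)) := by
  have hpow_three (u v : V) (h : G.Adj v u) :
      (G.adjMatrix R ^ 3) v u = lam + 2 * k - 1 := by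
    have hpaths : Nat.card {p : G.Walk v u // p.IsPath ∧ p.length = 3} = lam := by
      have := card_isCycle_mem_edges h.symm (l := 3) (by norm_num)
      have := hlam u v h.symm
      lia
    rw [eq_sub_iff_add_eq, adjMatrix_pow_three_apply_add_one R h, hpaths, hreg.degree_eq,
      hreg.degree_eq, add_assoc, two_mul]
  have hdiag (u : V) : (G.adjMatrix R ^ 4) u u = k * (lam + 2 * k - 1) := by
    rw [pow_succ', adjMatrix_mul_apply, Finset.sum_congr rfl fun v hv =>
      hpow_three u v ((G.mem_neighborFinset u v).1 hv).symm, Finset.sum_const,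
      card_neighborFinset_eq_degree, hreg.degree_eq, nsmul_eq_mul]
  simp only [Matrix.trace, Matrix.diag_apply, hdiag, Finset.sum_const, Finset.card_univ,
    nsmul_eq_mul]

end Traces

/-! ### Spectra determined by power sums -/

section PowerSums

variable {ι : Type*} {S : Finset ι}

theorem eq_of_sum_eq_card_mul_of_sum_sq_eq_card_mul {K : Type*} [CommRing K] [LinearOrder K]
    [IsStrictOrderedRing K] {f : ι → K} {μ : K} (h₁ : ∑ i ∈ S, f i = S.card * μ)
    (h₂ : ∑ i ∈ S, f i ^ 2 = S.card * μ ^ 2) {i : ι} (hi : i ∈ S) : f i = μ := by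
  have hvariance : ∑ i ∈ S, (f i - μ) ^ 2 = 0 := by
    simp only [sub_sq, Finset.sum_add_distrib, Finset.sum_sub_distrib, ← Finset.sum_mul,
      ← Finset.mul_sum, h₁, h₂, Finset.sum_const, nsmul_eq_mul]
    ring
  have hzero := (Finset.sum_eq_zero_iff_of_nonneg fun i _ => sq_nonneg (f i - μ)).1 hvariance i hi
  exact sub_eq_zero.1 (sq_eq_zero_iff.1 hzero)

variable {K : Type*} [CommRing K] [IsDomain K] [CharZero K]

theorem card_filter_eq_card_filter_not_of_sum_eq_zero [DecidableEq K] {f : ι → K} {r : K}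
    (hr : r ≠ 0) (hf : ∀ i ∈ S, f i = r ∨ f i = -r) (hsum : ∑ i ∈ S, f i = 0) :
    (S.filter (f · = r)).card = (S.filter (¬ f · = r)).card := by
  have hnot : ∀ i ∈ S.filter (¬ f · = r), f i = -r := fun i hi =>
    (hf i (Finset.mem_filter.1 hi).1).resolve_left (Finset.mem_filter.1 hi).2
  rw [← Finset.sum_filter_add_sum_filter_not S (f · = r),
    Finset.sum_congr rfl fun i hi => (Finset.mem_filter.1 hi).2, Finset.sum_congr rfl hnot,
    Finset.sum_const, Finset.sum_const, nsmul_eq_mul, nsmul_eq_mul, mul_neg, ← sub_eq_add_neg,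
    sub_eq_zero] at hsum
  exact_mod_cast mul_right_cancel₀ hr hsum

theorem prod_X_sub_C_of_sq_eq {e : ι → K} {μ : K} {m : ℕ} (hcard : S.card = 2 * m)
    (hsq : ∀ i ∈ S, e i ^ 2 = μ) (hsum : ∑ i ∈ S, e i = 0) :
    ∏ i ∈ S, (X - C (e i)) = (X ^ 2 - C μ) ^ m := by
  classical
  rcases S.eq_empty_or_nonempty with rfl | ⟨j, hj⟩
  · obtain rfl : m = 0 := by simpa using hcard
    simp
  obtain ⟨r, rfl⟩ : ∃ r, r ^ 2 = μ := ⟨e j, hsq j hj⟩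
  have hpm : ∀ i ∈ S, e i = r ∨ e i = -r := fun i hi => sq_eq_sq_iff_eq_or_eq_neg.1 (hsq i hi)
  rcases eq_or_ne r 0 with rfl | hr
  · have hzero : ∀ i ∈ S, e i = 0 := fun i hi => by simpa using hpm i hi
    rw [Finset.prod_congr rfl fun i hi => by rw [hzero i hi]]
    simp [hcard, pow_mul]
  have hbalanced := card_filter_eq_card_filter_not_of_sum_eq_zero hr hpm hsum
  have htotal := S.card_filter_add_card_filter_not (e · = r)
  calc
    ∏ i ∈ S, (X - C (e i))
      = ∏ i ∈ S, if e i = r then X - C r else X - C (-r) :=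
        Finset.prod_congr rfl fun i hi => by grind
    _ = (X - C r) ^ m * (X - C (-r)) ^ m := by
      rw [Finset.prod_ite, Finset.prod_const, Finset.prod_const]
      congr 2 <;> lia
    _ = (X ^ 2 - C (r ^ 2)) ^ m := by
      rw [← mul_pow, C_neg, C_pow]
      ring

end PowerSums

section Hermitian

variable {n : Type*} [Fintype n] [DecidableEq n]

theorem mem_spectrum_of_mulVec_eq_smul {K : Type*} [CommRing K] {A : Matrix n n K} {x : n → K}
    {t : K} (hx : x ≠ 0) (h : A.mulVec x = t • x) : t ∈ spectrum K A := by
  rw [← Matrix.spectrum_toLin']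
  exact (Module.End.hasEigenvalue_of_hasEigenvector
    ⟨Module.End.mem_eigenspace_iff.2 h, hx⟩).mem_spectrum

variable {𝕜 : Type*} [RCLike 𝕜] {A : Matrix n n 𝕜}

theorem trace_pow_eq_sum_eigenvalues_pow (hA : A.IsHermitian) (m : ℕ) :
    (A ^ m).trace = ∑ i, (hA.eigenvalues i : 𝕜) ^ m := by
  conv_lhs => rw [hA.spectral_theorem, ← map_pow, Unitary.conjStarAlgAut_apply,
    Matrix.trace_mul_cycle, Unitary.coe_star_mul_self, one_mul, Matrix.diagonal_pow,
    Matrix.trace_diagonal]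
  rfl

theorem charpoly_eq_of_trace_pow (hA : A.IsHermitian) {α β μ : ℝ} {m : ℕ}
    (hcard : Fintype.card n = 2 * m + 2) (hα : α ∈ spectrum ℝ A) (hβ : β ∈ spectrum ℝ A)
    (hαβ : α ≠ β) (h₁ : A.trace = α + β) (h₂ : (A ^ 2).trace = α ^ 2 + β ^ 2 + 2 * m * μ)
    (h₄ : (A ^ 4).trace = α ^ 4 + β ^ 4 + 2 * m * μ ^ 2) :
    A.charpoly = (X - C (α : 𝕜)) * (X - C (β : 𝕜)) * (X ^ 2 - C (μ : 𝕜)) ^ m := by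
  rw [hA.spectrum_real_eq_range_eigenvalues] at hα hβ
  obtain ⟨⟨i, rfl⟩, j, rfl⟩ := And.intro hα hβ
  have hij : i ≠ j := fun h => hαβ (congrArg _ h)
  let S : Finset n := {i, j}ᶜ
  have hS : S.card = 2 * m := by
    rw [Finset.card_compl, Finset.card_pair hij, hcard, Nat.add_sub_cancel]
  have hmoment (l : ℕ) : (A ^ l).trace = hA.eigenvalues i ^ l + hA.eigenvalues j ^ l +
      ∑ s ∈ S, (hA.eigenvalues s : 𝕜) ^ l := by
    rw [trace_pow_eq_sum_eigenvalues_pow hA, ← Finset.sum_add_sum_compl {i, j},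
      Finset.sum_pair hij]
  have hsum : ∑ s ∈ S, (hA.eigenvalues s : 𝕜) = 0 := by
    have := hmoment 1
    simp only [pow_one, h₁] at this
    exact left_eq_add.1 this
  have hsq : ∀ s ∈ S, hA.eigenvalues s ^ 2 = μ := by
    apply eq_of_sum_eq_card_mul_of_sum_sq_eq_card_mul
    · have := add_left_cancel ((hmoment 2).symm.trans h₂)
      rw [hS]
      exact_mod_cast this
    · have := add_left_cancel ((hmoment 4).symm.trans h₄)
      simp only [← pow_mul, hS]
      exact_mod_cast this
  rw [hA.charpoly_eq, ← Finset.prod_mul_prod_compl {i, j}, Finset.prod_pair hij,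
    prod_X_sub_C_of_sq_eq hS (fun s hs => by rw [← RCLike.ofReal_pow, hsq s hs]) hsum]

end Hermitian

/-! ### Regular bipartite graphs -/

section Bipartite

variable {V : Type*} {G : SimpleGraph V}

/-- The vector which is `1` on the first colour class of a two-colouring and `-1` on the second. It
is an eigenvector of the adjacency matrix of a regular bipartite graph. -/
def colorSign (R : Type*) [Ring R] (c : G.Coloring (Fin 2)) (v : V) : R :=
  (-1) ^ (c v : ℕ)

theorem colorSign_eq_neg_of_adj (R : Type*) [Ring R] (c : G.Coloring (Fin 2)) {v w : V}
    (h : G.Adj v w) : colorSign R c w = -colorSign R c v := by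
  have hne : c v ≠ c w := c.valid h
  unfold colorSign
  generalize c v = a at *
  generalize c w = b at *
  fin_cases a <;> fin_cases b <;> simp_all

variable [Fintype V] [DecidableRel G.Adj] {k : ℕ}

theorem adjMatrix_mulVec_colorSign (R : Type*) [Ring R] (hreg : G.IsRegularOfDegree k)
    (c : G.Coloring (Fin 2)) :
    (G.adjMatrix R).mulVec (colorSign R c) = (-k : R) • colorSign R c := by
  ext v
  have hneighbors : ∀ w ∈ G.neighborFinset v, colorSign R c w = -colorSign R c v := fun w hw =>
    colorSign_eq_neg_of_adj R c ((G.mem_neighborFinset v w).1 hw)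
  rw [adjMatrix_mulVec_apply, Finset.sum_congr rfl hneighbors, Finset.sum_const,
    card_neighborFinset_eq_degree, hreg.degree_eq, Pi.smul_apply, nsmul_eq_mul, smul_eq_mul,
    mul_neg, neg_mul]

theorem even_card_of_isRegularOfDegree_of_colorable_two (hk : k ≠ 0)
    (hreg : G.IsRegularOfDegree k) (hbip : G.Colorable 2) : Even (Fintype.card V) := by
  obtain ⟨c⟩ := hbip
  have hparts : G.IsBipartiteWith ({v | c v = 0} : Finset V) ({v | ¬ c v = 0} : Finset V) := by
    refine ⟨by exact_mod_cast Finset.disjoint_filter_filter_not _ _ _, fun v w h => ?_⟩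
    have hne : c v ≠ c w := c.valid h
    simp only [Finset.coe_filter, Finset.mem_univ, true_and, Set.mem_ofPred_eq]
    lia
  have hdegrees := isBipartiteWith_sum_degrees_eq hparts
  simp only [hreg.degree_eq, Finset.sum_const, smul_eq_mul] at hdegrees
  rw [← Finset.card_univ, ← Finset.card_filter_add_card_filter_not (c · = 0),
    Nat.eq_of_mul_eq_mul_right (Nat.pos_of_ne_zero hk) hdegrees]
  exact Even.add_self _

theorem charpoly_adjMatrix_of_trace_pow_four [DecidableEq V] [Nonempty V] (hk : k ≠ 0)
    (hreg : G.IsRegularOfDegree k) (hbip : G.Colorable 2) {μ : ℝ}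
    (hμ : (Fintype.card V - 2) * μ = Fintype.card V * k - 2 * k ^ 2)
    (h₄ : (G.adjMatrix ℝ ^ 4).trace = 2 * k ^ 4 + (Fintype.card V - 2) * μ ^ 2) :
    (G.adjMatrix ℝ).charpoly =
      (X - C (k : ℝ)) * (X + C (k : ℝ)) * (X ^ 2 - C μ) ^ ((Fintype.card V - 2) / 2) := by
  obtain ⟨m, hm⟩ : ∃ m, Fintype.card V = 2 * m + 2 := by
    obtain ⟨l, hl⟩ := even_card_of_isRegularOfDegree_of_colorable_two hk hreg hbip
    have := Fintype.card_pos (α := V)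
    exact ⟨l - 1, by lia⟩
  have hmR : (Fintype.card V : ℝ) = 2 * m + 2 := by exact_mod_cast hm
  have hk_mem : (k : ℝ) ∈ spectrum ℝ (G.adjMatrix ℝ) :=
    mem_spectrum_of_mulVec_eq_smul (x := Function.const V 1) (Function.const_ne_zero.2 one_ne_zero)
      (funext fun _ => adjMatrix_mulVec_const_apply_of_regular hreg)
  have hneg_mem : -(k : ℝ) ∈ spectrum ℝ (G.adjMatrix ℝ) := by
    obtain ⟨c⟩ := hbip
    refine mem_spectrum_of_mulVec_eq_smul ?_ (adjMatrix_mulVec_colorSign ℝ hreg c)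
    exact Function.ne_iff.2 ⟨Classical.arbitrary V, pow_ne_zero _ (neg_ne_zero.2 one_ne_zero)⟩
  have hne : (k : ℝ) ≠ -k := self_ne_neg.2 (Nat.cast_ne_zero.2 hk)
  have hherm : (G.adjMatrix ℝ).IsHermitian := by
    rw [Matrix.IsHermitian, Matrix.conjTranspose_eq_transpose_of_trivial, transpose_adjMatrix]
  rw [charpoly_eq_of_trace_pow hherm hm hk_mem hneg_mem hne (μ := μ), hm, Nat.add_sub_cancel,
    Nat.mul_div_cancel_left m two_pos]
  · simp
  · simp
  · simp only [trace_adjMatrix_pow_two, hreg.degree_eq, Finset.sum_const, Finset.card_univ,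
      nsmul_eq_mul, RCLike.ofReal_real_eq_id, id_eq]
    linear_combination (-1 : ℝ) * hμ + μ * hmR
  · rw [h₄]
    simp only [RCLike.ofReal_real_eq_id, id_eq]
    linear_combination μ ^ 2 * hmR

end Bipartite

theorem bipartite_egr_girth4_extremal_spectrum_general {n k lam : ℕ} (hk : k ≠ 0) (hn : 2 < n)
    {V : Type*} [Fintype V] [DecidableEq V] (G : SimpleGraph V) [DecidableRel G.Adj]
    (hcard : Fintype.card V = n) (hbip : G.Colorable 2) (hreg : G.IsRegularOfDegree k)
    (hlam : ∀ u v, G.Adj u v →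
      Nat.card {p : G.Walk u u // p.IsCycle ∧ p.length = 4 ∧ s(u, v) ∈ p.edges} = 2 * lam)
    (heq : (n : ℤ) * (lam + k - 1) = 2 * ((k : ℤ) ^ 3 - 2 * k ^ 2 + 2 * k - 1 + lam)) :
    (G.adjMatrix ℝ).charpoly =
      (X - C (k : ℝ)) * (X + C (k : ℝ)) *
        (X ^ 2 - C (((n : ℝ) * k - 2 * k ^ 2) / ((n : ℝ) - 2))) ^ ((n - 2) / 2) := by
  subst hcard
  have : Nonempty V := Fintype.card_pos_iff.1 (pos_of_gt hn)
  have hn₀ : (Fintype.card V : ℝ) - 2 ≠ 0 := sub_ne_zero.2 (by exact_mod_cast hn.ne')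
  have heqR : (Fintype.card V : ℝ) * (lam + k - 1) =
      2 * (k ^ 3 - 2 * k ^ 2 + 2 * k - 1 + lam) := by
    exact_mod_cast heq
  set μ : ℝ := (Fintype.card V * k - 2 * k ^ 2) / (Fintype.card V - 2)
  have hμ : (Fintype.card V - 2) * μ = Fintype.card V * k - 2 * k ^ 2 := mul_div_cancel₀ _ hn₀
  apply charpoly_adjMatrix_of_trace_pow_four hk hreg hbip hμ
  rw [trace_adjMatrix_pow_four ℝ hreg hlam]
  apply mul_left_cancel₀ hn₀
  linear_combination Fintype.card V * k * heqR -
    ((Fintype.card V - 2) * μ + (Fintype.card V * k - 2 * k ^ 2)) * hμ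

/-- If a bipartite `egr(n, k, 4, λ)` graph with `k ≥ 3` and `n > 2` attains the
eigenvalue lower bound with equality, i.e. `n(λ + k - 1) = 2(k³ - 2k² + 2k - 1 + λ)`,
then the characteristic polynomial of its adjacency matrix over `ℝ` is
`(X - k)(X + k)(X² - (nk - 2k²)/(n - 2))^((n-2)/2)`. -/
theorem bipartite_egr_girth4_extremal_spectrum (n k lam : ℕ) (hk : 3 ≤ k) (hn : 2 < n)
    {V : Type*} [Fintype V] [DecidableEq V] (G : SimpleGraph V) [DecidableRel G.Adj]
    (hbip : G.Colorable 2) (h : G.IsEGR n k 4 lam)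
    (heq : (n : ℤ) * (lam + k - 1) = 2 * ((k : ℤ) ^ 3 - 2 * k ^ 2 + 2 * k - 1 + lam)) :
    (G.adjMatrix ℝ).charpoly =
      (Polynomial.X - Polynomial.C (k : ℝ)) * (Polynomial.X + Polynomial.C (k : ℝ)) *
        (Polynomial.X ^ 2 -
          Polynomial.C (((n : ℝ) * k - 2 * k ^ 2) / ((n : ℝ) - 2))) ^ ((n - 2) / 2) := by
  obtain ⟨-, hcard, hncard, -, hlam⟩ := h
  have hreg : G.IsRegularOfDegree k := fun v => by
    rw [← hncard v, ← card_neighborFinset_eq_degree, ← Set.ncard_coe_finset, coe_neighborFinset]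
  exact bipartite_egr_girth4_extremal_spectrum_general (by lia) hn G
    (Nat.card_eq_fintype_card.symm.trans hcard) hbip hreg hlam heq
end
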